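/- Let (X,T) be a topological dynamical system with a compatible metric d, let {E_n}_{n≥1} be a sequence of nonempty subsets of X, and let ε>0. For each n let F_n⊆E_n be an (n,6ε)-separated set of E_n of maximal cardinality s_n(T,d,6ε,E_n), and set μ_n = (1/(n·#F_n)) Σ_{x∈F_n} Σ_{j=0}^{n−1} δ_{T^j x}. If n_j is a subsequence along which μ_{n_j} converges in the weak* topology to a T-invariant Borel probability measure μ, then limsup_{j→∞} (1/n_j) log s_{n_j}(T,d,6ε,E_{n_j}) ≤ R_{μ,L∞}(ε). -/

import Mathlib

open Filter MeasureTheory Set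
open scoped ENNReal Topology

noncomputable section

namespace MMD

variable {X : Type*}

/-- The `n`-th Bowen metric `d_n(x,y) = max_{0 ≤ j ≤ n-1} d(T^j x, T^j y)`. -/
noncomputable def bowenDist [PseudoMetricSpace X] (T : X → X) (n : ℕ) (x y : X) : ℝ :=
  ⨆ j : Fin n, dist (T^[(j : ℕ)] x) (T^[(j : ℕ)] y)

/-- `r_n(T,d,ε,Z)`: minimal cardinality of an `(n,ε)`-spanning set of `Z`. -/
noncomputable def spanNum [PseudoMetricSpace X] (T : X → X) (n : ℕ) (ε : ℝ) (Z : Set X) : ℕ :=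
  sInf {k | ∃ E : Finset X, E.card = k ∧ ∀ z ∈ Z, ∃ y ∈ E, bowenDist T n z y < ε}

/-- `s_n(T,d,ε,Z)`: maximal cardinality of an `(n,ε)`-separated subset of `Z`. -/
noncomputable def sepNum [PseudoMetricSpace X] (T : X → X) (n : ℕ) (ε : ℝ) (Z : Set X) : ℕ :=
  sSup {k | ∃ F : Finset X, ↑F ⊆ Z ∧ F.card = k ∧
    ∀ x ∈ F, ∀ y ∈ F, x ≠ y → ε ≤ bowenDist T n x y}

/-- `limsup_{n→∞} (1/n) log r_n(T,d,ε,X)`. -/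
noncomputable def spanGrowth [PseudoMetricSpace X] (T : X → X) (ε : ℝ) : ℝ≥0∞ :=
  Filter.limsup (fun n : ℕ => ENNReal.ofReal (Real.log (spanNum T n ε Set.univ)) / (n : ℝ≥0∞))
    Filter.atTop

/-- Upper metric mean dimension. -/
noncomputable def mdimMUpper [PseudoMetricSpace X] (T : X → X) : ℝ≥0∞ :=
  Filter.limsup (fun ε : ℝ => spanGrowth T ε / ENNReal.ofReal (Real.log (1 / ε)))
    (nhdsWithin 0 (Set.Ioi 0))

/-- Lower metric mean dimension. -/
noncomputable def mdimMLower [PseudoMetricSpace X] (T : X → X) : ℝ≥0∞ :=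
  Filter.liminf (fun ε : ℝ => spanGrowth T ε / ENNReal.ofReal (Real.log (1 / ε)))
    (nhdsWithin 0 (Set.Ioi 0))

/-- A finite (Borel) partition given as a finite set of measurable, pairwise disjoint sets
covering the space. -/
def IsFinPartition {Y : Type*} [MeasurableSpace Y] (P : Finset (Set Y)) : Prop :=
  (∀ s ∈ P, MeasurableSet s) ∧ (∀ s ∈ P, ∀ t ∈ P, s ≠ t → Disjoint s t) ∧
    ⋃₀ (P : Set (Set Y)) = Set.univ

/-- Mutual information `I(ξ;η)` of two random variables, as the supremum over finite
measurable partitions of the target spaces. -/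
noncomputable def mutualInfo {Ω A B : Type*} [MeasurableSpace Ω] [MeasurableSpace A]
    [MeasurableSpace B] (P : Measure Ω) (ξ : Ω → A) (η : Ω → B) : ℝ≥0∞ :=
  ⨆ (p : Finset (Set A)) (_ : IsFinPartition p) (q : Finset (Set B)) (_ : IsFinPartition q),
    ENNReal.ofReal (∑ s ∈ p, ∑ t ∈ q,
      (P (ξ ⁻¹' s ∩ η ⁻¹' t)).toReal *
        Real.log ((P (ξ ⁻¹' s ∩ η ⁻¹' t)).toReal /
          ((P (ξ ⁻¹' s)).toReal * (P (η ⁻¹' t)).toReal)))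

/-- The `L^∞` rate distortion function `R_{μ,L∞}(ε,s)`: the infimum of `I(ξ;η)/n` over all
`n ≥ 1` and all joint distributions `ν` of `(ξ, (η_0,…,η_{n-1}))` such that `ξ` has law `μ`,
the `η_k` take (almost surely) finitely many values, and
`E(#{0 ≤ k ≤ n-1 : d(T^k ξ, η_k) ≥ ε}) < s n`. -/
noncomputable def RDistLInftyS [PseudoMetricSpace X] [MeasurableSpace X] (T : X → X)
    (μ : Measure X) (ε s : ℝ) : ℝ≥0∞ :=
  ⨅ (n : ℕ) (_ : 0 < n) (ν : Measure (X × (Fin n → X))) (_ : IsProbabilityMeasure ν)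
    (_ : ν.map Prod.fst = μ) (_ : ∃ S : Finset X, ν {p | ∀ k, p.2 k ∈ S} = 1)
    (_ : ∫⁻ p, (Nat.card {k : Fin n // ε ≤ dist (T^[(k : ℕ)] p.1) (p.2 k)} : ℝ≥0∞) ∂ν
        < ENNReal.ofReal (s * n)),
    mutualInfo ν Prod.fst Prod.snd / (n : ℝ≥0∞)

/-- `R_{μ,L∞}(ε) = lim_{s→0} R_{μ,L∞}(ε,s)` (the limit equals the supremum over `s > 0`
by monotonicity). -/
noncomputable def RDistLInfty [PseudoMetricSpace X] [MeasurableSpace X] (T : X → X)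
    (μ : Measure X) (ε : ℝ) : ℝ≥0∞ :=
  ⨆ (s : ℝ) (_ : 0 < s), RDistLInftyS T μ ε s

/-- The `L¹` rate distortion function `R_{μ,1}(ε)`. -/
noncomputable def RDistL1 [PseudoMetricSpace X] [MeasurableSpace X] (T : X → X)
    (μ : Measure X) (ε : ℝ) : ℝ≥0∞ :=
  ⨅ (n : ℕ) (_ : 0 < n) (ν : Measure (X × (Fin n → X))) (_ : IsProbabilityMeasure ν)
    (_ : ν.map Prod.fst = μ) (_ : ∃ S : Finset X, ν {p | ∀ k, p.2 k ∈ S} = 1)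
    (_ : ∫⁻ p, ∑ k : Fin n, ENNReal.ofReal (dist (T^[(k : ℕ)] p.1) (p.2 k)) ∂ν
        < ENNReal.ofReal (ε * n)),
    mutualInfo ν Prod.fst Prod.snd / (n : ℝ≥0∞)

/-- `R^δ_μ(T,n,ε)`: minimal number of Bowen `(n,ε)`-balls whose union has `μ`-measure
greater than `1 - δ`. -/
noncomputable def katokNum [PseudoMetricSpace X] [MeasurableSpace X] (T : X → X)
    (μ : Measure X) (n : ℕ) (ε δ : ℝ) : ℕ :=
  sInf {k | ∃ E : Finset X, E.card = k ∧
    ENNReal.ofReal (1 - δ) < μ (⋃ x ∈ E, {y | bowenDist T n x y < ε})}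

/-- `h̄^K_μ(T,ε,δ)`. -/
noncomputable def katokUpperD [PseudoMetricSpace X] [MeasurableSpace X] (T : X → X)
    (μ : Measure X) (ε δ : ℝ) : ℝ≥0∞ :=
  Filter.limsup (fun n : ℕ => ENNReal.ofReal (Real.log (katokNum T μ n ε δ)) / (n : ℝ≥0∞))
    Filter.atTop

/-- `ḥ^K_μ(T,ε,δ)`. -/
noncomputable def katokLowerD [PseudoMetricSpace X] [MeasurableSpace X] (T : X → X)
    (μ : Measure X) (ε δ : ℝ) : ℝ≥0∞ :=
  Filter.liminf (fun n : ℕ => ENNReal.ofReal (Real.log (katokNum T μ n ε δ)) / (n : ℝ≥0∞))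
    Filter.atTop

/-- `h̄^K_μ(T,ε) = lim_{δ→0} h̄^K_μ(T,ε,δ)` (equal to the supremum over `δ ∈ (0,1)` by
monotonicity). -/
noncomputable def katokUpper [PseudoMetricSpace X] [MeasurableSpace X] (T : X → X)
    (μ : Measure X) (ε : ℝ) : ℝ≥0∞ :=
  ⨆ (δ : ℝ) (_ : δ ∈ Set.Ioo (0 : ℝ) 1), katokUpperD T μ ε δ

/-- `ḥ^K_μ(T,ε) = lim_{δ→0} ḥ^K_μ(T,ε,δ)`. -/
noncomputable def katokLower [PseudoMetricSpace X] [MeasurableSpace X] (T : X → X)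
    (μ : Measure X) (ε : ℝ) : ℝ≥0∞ :=
  ⨆ (δ : ℝ) (_ : δ ∈ Set.Ioo (0 : ℝ) 1), katokLowerD T μ ε δ

/-- The empirical measure `(1/n) Σ_{j=0}^{n-1} δ_{T^j x}`. -/
noncomputable def empMeas [MeasurableSpace X] (T : X → X) (n : ℕ) (x : X) : Measure X :=
  (n : ℝ≥0∞)⁻¹ • ∑ j ∈ Finset.range n, Measure.dirac (T^[j] x)

/-- Pfister–Sullivan entropy `PS_μ(T,d,ε)`: infimum over weak* open neighborhoods `F` of `μ`
of `limsup_n (1/n) log s_n(T,d,ε,X_{n,F})`, where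
`X_{n,F} = {x : (1/n) Σ_{j<n} δ_{T^j x} ∈ F}`. -/
noncomputable def PSent [MetricSpace X] [MeasurableSpace X] [OpensMeasurableSpace X]
    (T : X → X) (μ : ProbabilityMeasure X) (ε : ℝ) : ℝ≥0∞ :=
  ⨅ (F : Set (ProbabilityMeasure X)) (_ : IsOpen F) (_ : μ ∈ F),
    Filter.limsup (fun n : ℕ => ENNReal.ofReal (Real.log (sepNum T n ε
      {x : X | ∃ h : IsProbabilityMeasure (empMeas T n x),
        (⟨empMeas T n x, h⟩ : ProbabilityMeasure X) ∈ F})) / (n : ℝ≥0∞)) Filter.atTop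

/-- Partition entropy `H_μ(P) = Σ_{A∈P} -μ(A) log μ(A)`. -/
noncomputable def entP [MeasurableSpace X] (μ : Measure X) (P : Finset (Set X)) : ℝ≥0∞ :=
  ∑ A ∈ P, ENNReal.ofReal (-((μ A).toReal * Real.log ((μ A).toReal)))

/-- The join `P^n = ∨_{j=0}^{n-1} T^{-j} P`. -/
noncomputable def joinN (T : X → X) (P : Finset (Set X)) (n : ℕ) : Finset (Set X) :=
  letI : DecidableEq (Set X) := Classical.decEq _
  (Fintype.piFinset (fun _ : Fin n => P)).image (fun f => ⋂ j : Fin n, T^[(j : ℕ)] ⁻¹' f j)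

/-- `h_μ(T,P) = lim_n H_μ(P^n)/n` (the limit exists and equals the liminf). -/
noncomputable def entRate [MeasurableSpace X] (T : X → X) (μ : Measure X)
    (P : Finset (Set X)) : ℝ≥0∞ :=
  Filter.liminf (fun n : ℕ => entP μ (joinN T P n) / (n : ℝ≥0∞)) Filter.atTop

/-- `inf { h_μ(T,P) : P a finite Borel partition with diam P ≤ ε }`. -/
noncomputable def infEntRate [PseudoMetricSpace X] [MeasurableSpace X] (T : X → X)
    (μ : Measure X) (ε : ℝ) : ℝ≥0∞ :=
  ⨅ (P : Finset (Set X)) (_ : IsFinPartition P) (_ : ∀ s ∈ P, Metric.diam s ≤ ε),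
    entRate T μ P

/-- Kolmogorov–Sinai entropy `h_μ(T)`. -/
noncomputable def ksEntropy [MeasurableSpace X] (T : X → X) (μ : Measure X) : ℝ≥0∞ :=
  ⨆ (P : Finset (Set X)) (_ : IsFinPartition P), entRate T μ P

/-- A finite open cover. -/
def IsFinOpenCover [TopologicalSpace X] (α : Finset (Set X)) : Prop :=
  (∀ A ∈ α, IsOpen A) ∧ ⋃₀ (α : Set (Set X)) = Set.univ

/-- `ord(β) = max_x #{B ∈ β : x ∈ B} - 1`. -/
noncomputable def ordCover (β : Finset (Set X)) : ℕ :=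
  sSup {k | ∃ x : X, Nat.card {B : Set X // B ∈ β ∧ x ∈ B} = k} - 1

/-- `D(α) = min_{β ≻ α} ord(β)`, over finite open covers `β` refining `α`. -/
noncomputable def Dcover [TopologicalSpace X] (α : Finset (Set X)) : ℕ :=
  sInf {k | ∃ β : Finset (Set X), IsFinOpenCover β ∧ (∀ B ∈ β, ∃ A ∈ α, B ⊆ A) ∧
    ordCover β = k}

/-- Mean (topological) dimension `mdim(X,T) = sup_α lim_n D(α^n)/n`. -/
noncomputable def mdimTop [TopologicalSpace X] (T : X → X) : ℝ≥0∞ :=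
  ⨆ (α : Finset (Set X)) (_ : IsFinOpenCover α),
    Filter.liminf (fun n : ℕ => (Dcover (joinN T α n) : ℝ≥0∞) / (n : ℝ≥0∞)) Filter.atTop

/-- The marker property for a homeomorphism. -/
def MarkerProperty [TopologicalSpace X] (T : X ≃ₜ X) : Prop :=
  ∀ N : ℕ, 0 < N → ∃ U : Set X, IsOpen U ∧
    (∀ n : ℕ, 1 ≤ n → n ≤ N → U ∩ (⇑T)^[n] '' U = ∅) ∧
    ⋃ n : ℤ, ⇑(T.toEquiv ^ n) '' U = Set.univ

/-- Upper dimension `limsup_{ε→0} F(μ,ε)/log(1/ε)` associated with a candidate `F`. -/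
noncomputable def dimFUpper [MeasurableSpace X] (F : Measure X → ℝ → ℝ≥0∞)
    (μ : Measure X) : ℝ≥0∞ :=
  Filter.limsup (fun ε : ℝ => F μ ε / ENNReal.ofReal (Real.log (1 / ε)))
    (nhdsWithin 0 (Set.Ioi 0))

/-- Lower dimension `liminf_{ε→0} F(μ,ε)/log(1/ε)` associated with a candidate `F`. -/
noncomputable def dimFLower [MeasurableSpace X] (F : Measure X → ℝ → ℝ≥0∞)
    (μ : Measure X) : ℝ≥0∞ :=
  Filter.liminf (fun ε : ℝ => F μ ε / ENNReal.ofReal (Real.log (1 / ε)))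
    (nhdsWithin 0 (Set.Ioi 0))

/-- A candidate function: for each invariant probability measure `μ`, `F(μ,·)` is
non-decreasing as `ε` decreases, and `F(μ,ε) → h_μ(T)` as `ε → 0⁺`. -/
def IsCandidate [MeasurableSpace X] (T : X → X) (F : Measure X → ℝ → ℝ≥0∞) : Prop :=
  ∀ μ : Measure X, IsProbabilityMeasure μ → MeasurePreserving T μ μ →
    (∀ ε₁ ε₂ : ℝ, 0 < ε₁ → ε₁ ≤ ε₂ → F μ ε₂ ≤ F μ ε₁) ∧
    Filter.Tendsto (F μ) (nhdsWithin 0 (Set.Ioi 0)) (nhds (ksEntropy T μ))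

end MMD

open MMD

/-!
Let `(ξ, η)` compete in the rate distortion problem for `μ` with block length `m`, let `c` be the
block cost `lam * #{k < m : d(T^k ξ, η_k) is large}`, smoothed to be continuous, and let
`H(u) = -log E exp (-c(u, η))` be its free energy relative to the law of `η`. The function
`H(u) - c(u, y)` is admissible in the Donsker–Varadhan formula, which gives
`∫ H dμ ≤ I(ξ; η) + E c(ξ, η)`, and the last term is at most `lam * s * m`.

Conversely, fix a reference sequence `z`. A point of an `(n, δ)`-separated set `F` is determined by
the times at which it is `δ/2`-close to `z` together with `δ/2`-net points at the other times, so
that the sum over `x ∈ F` of `exp (-(total cost of x against z))` is at most `K ^ n`, where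
`K = 1 + #C * exp (-lam)` and `C` is the net. Taking for `z` independent blocks distributed like
`η`, starting at each of the phases `t < m`, and averaging turns total costs into Birkhoff sums of
`H`. Jensen's inequality then bounds `log #F / n` by `1/m` times the integral of `H` against the
empirical measure, plus `log K` and a boundary term of order `m * lam / n`. Let `n → ∞`, and then
`lam → ∞` with `s = exp (-lam)`.
-/

namespace MMD

section Compact

variable {Y : Type*} [PseudoMetricSpace Y] [CompactSpace Y]

lemma exists_finset_forall_dist_lt {δ : ℝ} (hδ : 0 < δ) :
    ∃ C : Finset Y, ∀ x, ∃ c ∈ C, dist x c < δ := by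
  obtain ⟨C, hC⟩ := CompactSpace.elim_nhds_subcover (fun x : Y => Metric.ball x δ)
    fun x => Metric.ball_mem_nhds x hδ
  refine ⟨C, fun x => ?_⟩
  have hx : x ∈ ⋃ c ∈ C, Metric.ball c δ := hC ▸ mem_univ x
  simpa only [mem_iUnion, Metric.mem_ball, exists_prop] using hx

lemma exists_isFinPartition_dist_lt [MeasurableSpace Y] [OpensMeasurableSpace Y] {δ : ℝ}
    (hδ : 0 < δ) :
    ∃ p : Finset (Set Y), IsFinPartition p ∧ ∀ s ∈ p, ∀ x ∈ s, ∀ y ∈ s, dist x y < δ := by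
  classical
  obtain ⟨C, hC⟩ := exists_finset_forall_dist_lt (Y := Y) (half_pos hδ)
  let ball : Fin C.card → Set Y := fun i => Metric.ball (C.equivFin.symm i : Y) (δ / 2)
  refine ⟨Finset.univ.image (disjointed ball), ⟨?_, ?_, ?_⟩, ?_⟩
  · refine Finset.forall_mem_image.2 fun i _ => ?_
    exact disjointedRec (p := MeasurableSet) (fun _ _ h => h.diff Metric.isOpen_ball.measurableSet)
      Metric.isOpen_ball.measurableSet
  · refine Finset.forall_mem_image.2 fun i _ => Finset.forall_mem_image.2 fun j _ hne => ?_
    exact disjoint_disjointed ball fun hij => hne (hij ▸ rfl)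
  · rw [Finset.coe_image, Finset.coe_univ, image_univ, sUnion_range, iUnion_disjointed,
      eq_univ_iff_forall]
    intro x
    obtain ⟨c, hc, hxc⟩ := hC x
    refine mem_iUnion.2 ⟨C.equivFin ⟨c, hc⟩, ?_⟩
    simpa only [ball, Equiv.symm_apply_apply, Metric.mem_ball] using hxc
  · refine Finset.forall_mem_image.2 fun i _ x hx y hy => ?_
    have hxi : dist x _ < δ / 2 := disjointed_subset ball i hx
    have hyi : dist y _ < δ / 2 := disjointed_subset ball i hy
    linarith [dist_triangle_right x y (C.equivFin.symm i : Y)]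

lemma integrable_of_continuous [MeasurableSpace Y] [OpensMeasurableSpace Y] (P : Measure Y)
    [IsFiniteMeasure P] {f : Y → ℝ} (hf : Continuous f) : Integrable f P :=
  hf.integrable_of_hasCompactSupport (HasCompactSupport.of_compactSpace f)

end Compact

section MutualInformation

variable {Ω A B : Type*} [MeasurableSpace Ω] [MeasurableSpace A] [MeasurableSpace B]
  {P : Measure Ω} {ξ : Ω → A} {η : Ω → B} {p : Finset (Set A)} {q : Finset (Set B)}

/-- The mutual information of the discretisations of `ξ` and `η` along finite partitions `p` and
`q`: the quantity whose supremum over `p` and `q` is `mutualInfo P ξ η`. -/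
def partitionInfo (P : Measure Ω) (ξ : Ω → A) (η : Ω → B) (p : Finset (Set A))
    (q : Finset (Set B)) : ℝ :=
  ∑ s ∈ p, ∑ t ∈ q, P.real (ξ ⁻¹' s ∩ η ⁻¹' t) *
    Real.log (P.real (ξ ⁻¹' s ∩ η ⁻¹' t) / (P.real (ξ ⁻¹' s) * P.real (η ⁻¹' t)))

lemma ofReal_partitionInfo_le_mutualInfo (hp : IsFinPartition p) (hq : IsFinPartition q) :
    ENNReal.ofReal (partitionInfo P ξ η p q) ≤ mutualInfo P ξ η :=
  le_iSup₂_of_le p hp (le_iSup₂_of_le q hq le_rfl)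

lemma IsFinPartition.integral_eq_sum (hp : IsFinPartition p) (hξ : Measurable ξ) {f : Ω → ℝ}
    (hf : Integrable f P) : ∫ ω, f ω ∂P = ∑ s ∈ p, ∫ ω in ξ ⁻¹' s, f ω ∂P := by
  obtain ⟨hmeas, hdisj, hcover⟩ := hp
  have huniv : ⋃ s ∈ p, ξ ⁻¹' s = univ := by
    rw [← preimage_iUnion₂, ← Set.preimage_univ (f := ξ), ← hcover, sUnion_eq_biUnion]
    rfl
  rw [← integral_biUnion_finset p (fun s hs => hξ (hmeas s hs))
    (fun s hs t ht hst => (hdisj s hs t ht hst).preimage ξ) fun s _ => hf.integrableOn, huniv,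
    setIntegral_univ]

lemma integral_eq_sum_inter (hp : IsFinPartition p) (hq : IsFinPartition q) (hξ : Measurable ξ)
    (hη : Measurable η) {f : Ω → ℝ} (hf : Integrable f P) :
    ∫ ω, f ω ∂P = ∑ s ∈ p, ∑ t ∈ q, ∫ ω in ξ ⁻¹' s ∩ η ⁻¹' t, f ω ∂P := by
  rw [hp.integral_eq_sum hξ hf]
  refine Finset.sum_congr rfl fun s _ => ?_
  rw [hq.integral_eq_sum hη hf.integrableOn]
  refine Finset.sum_congr rfl fun t ht => ?_
  rw [Measure.restrict_restrict (hη (hq.1 t ht)), inter_comm]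

lemma integral_le_sum_inter [IsFiniteMeasure P] (hp : IsFinPartition p) (hq : IsFinPartition q)
    (hξ : Measurable ξ) (hη : Measurable η) {f : Ω → ℝ} (hf : Integrable f P)
    {G : Set A → Set B → ℝ}
    (hG : ∀ s ∈ p, ∀ t ∈ q, ∀ ω ∈ ξ ⁻¹' s ∩ η ⁻¹' t, f ω ≤ G s t) :
    ∫ ω, f ω ∂P ≤ ∑ s ∈ p, ∑ t ∈ q, P.real (ξ ⁻¹' s ∩ η ⁻¹' t) * G s t := by
  rw [integral_eq_sum_inter hp hq hξ hη hf]
  refine Finset.sum_le_sum fun s hs => Finset.sum_le_sum fun t ht => ?_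
  rw [← smul_eq_mul, ← setIntegral_const]
  exact setIntegral_mono_on hf.integrableOn (integrable_const _).integrableOn
    ((hξ (hp.1 s hs)).inter (hη (hq.1 t ht))) (hG s hs t ht)

lemma sum_inter_le_integral [IsFiniteMeasure P] (hp : IsFinPartition p) (hq : IsFinPartition q)
    (hξ : Measurable ξ) (hη : Measurable η) {f : Ω → ℝ} (hf : Integrable f P)
    {G : Set A → Set B → ℝ}
    (hG : ∀ s ∈ p, ∀ t ∈ q, ∀ ω ∈ ξ ⁻¹' s ∩ η ⁻¹' t, G s t ≤ f ω) :
    ∑ s ∈ p, ∑ t ∈ q, P.real (ξ ⁻¹' s ∩ η ⁻¹' t) * G s t ≤ ∫ ω, f ω ∂P := by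
  have h := integral_le_sum_inter (G := fun s t => -G s t) hp hq hξ hη hf.neg
    fun s hs t ht ω hω => neg_le_neg (hG s hs t ht ω hω)
  simp only [Pi.neg_apply, integral_neg, mul_neg, Finset.sum_neg_distrib] at h
  exact neg_le_neg_iff.1 h

lemma sum_measureReal_inter [IsProbabilityMeasure P] (hp : IsFinPartition p)
    (hq : IsFinPartition q) (hξ : Measurable ξ) (hη : Measurable η) :
    ∑ s ∈ p, ∑ t ∈ q, P.real (ξ ⁻¹' s ∩ η ⁻¹' t) = 1 := by
  simpa using (integral_eq_sum_inter hp hq hξ hη (integrable_const (1 : ℝ) (μ := P))).symm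

/-- The Fenchel–Young inequality for `x ↦ x log x`, relative to a reference weight `b`. -/
lemma mul_add_sub_mul_exp_le_mul_log_div {a b : ℝ} (ha : 0 ≤ a) (hb : 0 ≤ b)
    (hab : b = 0 → a = 0) (G : ℝ) :
    a * G + a - b * Real.exp G ≤ a * Real.log (a / b) := by
  rcases ha.eq_or_lt with rfl | ha
  · simpa using mul_nonneg hb (Real.exp_pos G).le
  have hb : 0 < b := hb.lt_of_ne fun h => ha.ne' (hab h.symm)
  have hlog : Real.log (a / (b * Real.exp G)) = Real.log (a / b) - G := by
    rw [← div_div, Real.log_div (by positivity) (by positivity), Real.log_exp]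
  have htangent : 1 - b * Real.exp G / a ≤ Real.log (a / b) - G := by
    rw [← hlog, ← inv_div]
    exact Real.one_sub_inv_le_log_of_pos (by positivity)
  calc a * G + a - b * Real.exp G = a * (1 - b * Real.exp G / a) + a * G := by field_simp; ring
    _ ≤ a * (Real.log (a / b) - G) + a * G := by gcongr
    _ = a * Real.log (a / b) := by ring

lemma sum_mul_le_partitionInfo [IsProbabilityMeasure P] (hp : IsFinPartition p)
    (hq : IsFinPartition q) (hξ : Measurable ξ) (hη : Measurable η) {G : Set A → Set B → ℝ}
    (hG : ∑ s ∈ p, ∑ t ∈ q, P.real (ξ ⁻¹' s) * P.real (η ⁻¹' t) * Real.exp (G s t) ≤ 1) :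
    ∑ s ∈ p, ∑ t ∈ q, P.real (ξ ⁻¹' s ∩ η ⁻¹' t) * G s t ≤ partitionInfo P ξ η p q := by
  have hcell (s : Set A) (t : Set B) :
      P.real (ξ ⁻¹' s ∩ η ⁻¹' t) * G s t + P.real (ξ ⁻¹' s ∩ η ⁻¹' t) -
          P.real (ξ ⁻¹' s) * P.real (η ⁻¹' t) * Real.exp (G s t) ≤
        P.real (ξ ⁻¹' s ∩ η ⁻¹' t) *
          Real.log (P.real (ξ ⁻¹' s ∩ η ⁻¹' t) / (P.real (ξ ⁻¹' s) * P.real (η ⁻¹' t))) := by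
    refine mul_add_sub_mul_exp_le_mul_log_div measureReal_nonneg (by positivity) (fun h => ?_) _
    rcases mul_eq_zero.1 h with h | h
    · exact measureReal_mono_null inter_subset_left h
    · exact measureReal_mono_null inter_subset_right h
  have hsum := Finset.sum_le_sum fun s (_ : s ∈ p) =>
    Finset.sum_le_sum fun t (_ : t ∈ q) => hcell s t
  simp only [Finset.sum_sub_distrib, Finset.sum_add_distrib,
    sum_measureReal_inter hp hq hξ hη] at hsum
  rw [partitionInfo]
  linarith

end MutualInformation

section DonskerVaradhan

variable {Ω A B : Type*} [MeasurableSpace Ω]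
  [PseudoMetricSpace A] [CompactSpace A] [MeasurableSpace A] [BorelSpace A]
  [PseudoMetricSpace B] [CompactSpace B] [MeasurableSpace B] [BorelSpace B]

lemma exists_isFinPartition_oscillation_le {g : A × B → ℝ} (hg : Continuous g) {κ : ℝ}
    (hκ : 0 < κ) :
    ∃ (p : Finset (Set A)) (q : Finset (Set B)) (G : Set A → Set B → ℝ),
      IsFinPartition p ∧ IsFinPartition q ∧
        ∀ s ∈ p, ∀ t ∈ q, ∀ x ∈ s ×ˢ t, G s t ≤ g x ∧ g x ≤ G s t + κ := by
  obtain ⟨δ, hδ, hunif⟩ := Metric.uniformContinuous_iff.1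
    (CompactSpace.uniformContinuous_of_continuous hg) (κ / 2) (half_pos hκ)
  obtain ⟨p, hp, hpδ⟩ := exists_isFinPartition_dist_lt (Y := A) hδ
  obtain ⟨q, hq, hqδ⟩ := exists_isFinPartition_dist_lt (Y := B) hδ
  have hcell (s : Set A) (t : Set B) :
      ∃ G : ℝ, s ∈ p → t ∈ q → ∀ x ∈ s ×ˢ t, G ≤ g x ∧ g x ≤ G + κ := by
    rcases (s ×ˢ t).eq_empty_or_nonempty with hempty | ⟨x₀, hx₀⟩
    · exact ⟨0, fun _ _ x hx => absurd hx (hempty ▸ notMem_empty x)⟩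
    refine ⟨g x₀ - κ / 2, fun hs ht x hx => ?_⟩
    have hdist : dist x x₀ < δ :=
      max_lt (hpδ s hs _ hx.1 _ hx₀.1) (hqδ t ht _ hx.2 _ hx₀.2)
    have hosc := abs_lt.1 (hunif hdist)
    constructor <;> linarith
  choose G hG using hcell
  exact ⟨p, q, G, hp, hq, fun s hs t ht => hG s t hs ht⟩

lemma integral_le_mutualInfo {P : Measure Ω} [IsProbabilityMeasure P] {ξ : Ω → A} {η : Ω → B}
    (hξ : Measurable ξ) (hη : Measurable η) {g : A × B → ℝ} (hg : Continuous g)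
    (hint : ∫ x, Real.exp (g x) ∂((P.map ξ).prod (P.map η)) ≤ 1) :
    ENNReal.ofReal (∫ ω, g (ξ ω, η ω) ∂P) ≤ mutualInfo P ξ η := by
  have := Measure.isProbabilityMeasure_map (μ := P) hξ.aemeasurable
  have := Measure.isProbabilityMeasure_map (μ := P) hη.aemeasurable
  refine ENNReal.le_of_forall_pos_le_add fun κ hκ _ => ?_
  obtain ⟨p, q, G, hp, hq, hG⟩ := exists_isFinPartition_oscillation_le hg (NNReal.coe_pos.2 hκ)
  have hexp : ∑ s ∈ p, ∑ t ∈ q, P.real (ξ ⁻¹' s) * P.real (η ⁻¹' t) * Real.exp (G s t) ≤ 1 := by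
    refine le_trans (le_of_eq ?_) ((sum_inter_le_integral hp hq measurable_fst measurable_snd
      (integrable_of_continuous _ (Real.continuous_exp.comp hg)) fun s hs t ht x hx =>
        Real.exp_le_exp.2 (hG s hs t ht x hx).1).trans hint)
    refine Finset.sum_congr rfl fun s hs => Finset.sum_congr rfl fun t ht => ?_
    rw [← Set.prod_eq, measureReal_prod_prod, map_measureReal_apply hξ (hp.1 s hs),
      map_measureReal_apply hη (hq.1 t ht)]
  have hgint : Integrable (fun ω => g (ξ ω, η ω)) P :=
    (integrable_of_continuous (P.map fun ω => (ξ ω, η ω)) hg).comp_measurable (hξ.prodMk hη)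
  have hmain : ∫ ω, g (ξ ω, η ω) ∂P ≤ partitionInfo P ξ η p q + κ :=
    calc ∫ ω, g (ξ ω, η ω) ∂P
        ≤ ∑ s ∈ p, ∑ t ∈ q, P.real (ξ ⁻¹' s ∩ η ⁻¹' t) * (G s t + κ) :=
          integral_le_sum_inter hp hq hξ hη hgint fun s hs t ht ω hω => (hG s hs t ht _ hω).2
      _ = ∑ s ∈ p, ∑ t ∈ q, P.real (ξ ⁻¹' s ∩ η ⁻¹' t) * G s t + κ := by
          simp only [mul_add, Finset.sum_add_distrib, ← Finset.sum_mul,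
            sum_measureReal_inter hp hq hξ hη, one_mul]
      _ ≤ partitionInfo P ξ η p q + κ := by
          gcongr
          exact sum_mul_le_partitionInfo hp hq hξ hη hexp
  calc ENNReal.ofReal (∫ ω, g (ξ ω, η ω) ∂P)
      ≤ ENNReal.ofReal (partitionInfo P ξ η p q) + ENNReal.ofReal κ :=
        (ENNReal.ofReal_le_ofReal hmain).trans ENNReal.ofReal_add_le
    _ ≤ mutualInfo P ξ η + κ := by
        rw [ENNReal.ofReal_coe_nnreal]
        gcongr
        exact ofReal_partitionInfo_le_mutualInfo hp hq

end DonskerVaradhan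

section FreeEnergy

variable {A B : Type*} [TopologicalSpace A]
  [PseudoMetricSpace B] [CompactSpace B] [MeasurableSpace B] [BorelSpace B]

/-- The free energy `-log ∫ exp (-c(a, b)) dr(b)` of the cost `c(a, ·)` relative to the reference
measure `r`. -/
def freeEnergy (c : A → B → ℝ) (r : Measure B) (a : A) : ℝ :=
  -Real.log (∫ b, Real.exp (-c a b) ∂r)

variable {c : A → B → ℝ} {r : Measure B} [IsProbabilityMeasure r]

lemma integrable_exp_neg (hc : Continuous (Function.uncurry c)) (a : A) :
    Integrable (fun b => Real.exp (-c a b)) r :=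
  integrable_of_continuous r (Real.continuous_exp.comp (hc.uncurry_left a).neg)

lemma exp_neg_freeEnergy (hc : Continuous (Function.uncurry c)) (a : A) :
    Real.exp (-freeEnergy c r a) = ∫ b, Real.exp (-c a b) ∂r := by
  rw [freeEnergy, neg_neg, Real.exp_log (integral_exp_pos (integrable_exp_neg hc a))]

lemma freeEnergy_nonneg (hc : Continuous (Function.uncurry c)) (h0 : ∀ a b, 0 ≤ c a b) (a : A) :
    0 ≤ freeEnergy c r a := by
  have hle : ∫ b, Real.exp (-c a b) ∂r ≤ ∫ _, (1 : ℝ) ∂r :=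
    integral_mono (integrable_exp_neg hc a) (integrable_const _) fun b =>
      Real.exp_le_one_iff.2 (neg_nonpos.2 (h0 a b))
  rw [← exp_neg_freeEnergy hc, integral_const, probReal_univ, one_smul, Real.exp_le_one_iff] at hle
  exact neg_nonpos.1 hle

lemma freeEnergy_le (hc : Continuous (Function.uncurry c)) {M : ℝ} (hM : ∀ a b, c a b ≤ M)
    (a : A) : freeEnergy c r a ≤ M := by
  have hle : ∫ _, Real.exp (-M) ∂r ≤ ∫ b, Real.exp (-c a b) ∂r :=
    integral_mono (integrable_const _) (integrable_exp_neg hc a) fun b =>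
      Real.exp_le_exp.2 (neg_le_neg (hM a b))
  rw [← exp_neg_freeEnergy hc, integral_const, probReal_univ, one_smul, Real.exp_le_exp] at hle
  exact neg_le_neg_iff.1 hle

lemma continuous_freeEnergy [FirstCountableTopology A] [LocallyCompactSpace A]
    (hc : Continuous (Function.uncurry c)) :
    Continuous (freeEnergy c r) := by
  have hpartition : Continuous fun a => ∫ b, Real.exp (-c a b) ∂r := by
    simpa only [setIntegral_univ] using continuous_parametric_integral_of_continuous (μ := r)
      (f := fun a b => Real.exp (-c a b)) (Real.continuous_exp.comp hc.neg) isCompact_univ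
  exact (hpartition.log fun a => (integral_exp_pos (integrable_exp_neg hc a)).ne').neg

lemma integral_pi_exp_neg_sum_eq_exp_neg_birkhoffSum (hc : Continuous (Function.uncurry c))
    (S : A → A) (J : ℕ) (a : A) :
    ∫ w, Real.exp (-∑ j : Fin J, c (S^[(j : ℕ)] a) (w j)) ∂(Measure.pi fun _ : Fin J => r) =
      Real.exp (-birkhoffSum S (freeEnergy c r) J a) := by
  simp only [birkhoffSum, Finset.sum_range, ← Finset.sum_neg_distrib, Real.exp_sum,
    exp_neg_freeEnergy hc]
  exact integral_fintype_prod_eq_prod fun (j : Fin J) b => Real.exp (-c (S^[(j : ℕ)] a) b)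

end FreeEnergy

section RateBound

variable {Ω A B : Type*} [MeasurableSpace Ω]
  [PseudoMetricSpace A] [CompactSpace A] [MeasurableSpace A] [BorelSpace A]
  [PseudoMetricSpace B] [CompactSpace B] [MeasurableSpace B] [BorelSpace B]

lemma integral_freeEnergy_le {P : Measure Ω} [IsProbabilityMeasure P] {ξ : Ω → A} {η : Ω → B}
    (hξ : Measurable ξ) (hη : Measurable η) {c : A → B → ℝ} (hc : Continuous (Function.uncurry c)) :
    ENNReal.ofReal (∫ a, freeEnergy c (P.map η) a ∂(P.map ξ)) ≤
      mutualInfo P ξ η + ENNReal.ofReal (∫ ω, c (ξ ω) (η ω) ∂P) := by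
  have := Measure.isProbabilityMeasure_map (μ := P) hξ.aemeasurable
  have := Measure.isProbabilityMeasure_map (μ := P) hη.aemeasurable
  have hH : Continuous (freeEnergy c (P.map η)) := continuous_freeEnergy hc
  let g : A × B → ℝ := fun x => freeEnergy c (P.map η) x.1 - c x.1 x.2
  have hg : Continuous g := (hH.comp continuous_fst).sub hc
  have hnormalised (a : A) : ∫ b, Real.exp (g (a, b)) ∂(P.map η) = 1 := by
    simp only [g, sub_eq_add_neg, Real.exp_add]
    rw [integral_const_mul, ← exp_neg_freeEnergy hc, ← Real.exp_add, add_neg_cancel,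
      Real.exp_zero]
  have hdv : ENNReal.ofReal (∫ ω, g (ξ ω, η ω) ∂P) ≤ mutualInfo P ξ η := by
    refine integral_le_mutualInfo hξ hη hg (le_of_eq ?_)
    rw [integral_prod (fun x => Real.exp (g x))
      (integrable_of_continuous _ (Real.continuous_exp.comp hg))]
    simp only [hnormalised, integral_const, probReal_univ, one_smul]
  have hsplit : ∫ a, freeEnergy c (P.map η) a ∂(P.map ξ) =
      ∫ ω, g (ξ ω, η ω) ∂P + ∫ ω, c (ξ ω) (η ω) ∂P := by
    rw [integral_map hξ.aemeasurable hH.aestronglyMeasurable, ← integral_add]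
    · simp only [g, sub_add_cancel]
    · exact (integrable_of_continuous (P.map fun ω => (ξ ω, η ω)) hg).comp_measurable
        (hξ.prodMk hη)
    · exact (integrable_of_continuous (P.map fun ω => (ξ ω, η ω)) hc).comp_measurable
        (hξ.prodMk hη)
  rw [hsplit]
  exact ENNReal.ofReal_add_le.trans (by gcongr)

end RateBound

section Counting

lemma sum_prod_le_sum_pow_of_injOn {α σ : Type*} [Fintype σ] {n : ℕ} {F : Finset α}
    {code : α → Fin n → σ} (hcode : InjOn code F) {w : σ → ℝ} (hw : ∀ s, 0 ≤ w s) :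
    ∑ x ∈ F, ∏ k, w (code x k) ≤ (∑ s, w s) ^ n := by
  classical
  rw [Fintype.sum_pow, ← Finset.sum_image (f := fun p : Fin n → σ => ∏ k, w (p k)) hcode]
  exact Finset.sum_le_sum_of_subset_of_nonneg (Finset.subset_univ _)
    fun p _ _ => Finset.prod_nonneg fun k _ => hw (p k)

lemma card_mul_log_card_sub_le_sum {α : Type*} {F : Finset α} (hF : F.Nonempty) {f : α → ℝ}
    {M : ℝ} (hM : 0 < M) (hf : ∑ x ∈ F, Real.exp (-f x) ≤ M) :
    F.card * (Real.log F.card - Real.log M) ≤ ∑ x ∈ F, f x := by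
  have hcard : (0 : ℝ) < F.card := Nat.cast_pos.2 hF.card_pos
  set L := Real.log F.card - Real.log M with hL
  have hexpL : Real.exp L = F.card / M := by
    rw [hL, Real.exp_sub, Real.exp_log hcard, Real.exp_log hM]
  have htangent : ∑ x ∈ F, (L - f x + 1) ≤ F.card :=
    calc ∑ x ∈ F, (L - f x + 1) ≤ ∑ x ∈ F, Real.exp (L - f x) :=
          Finset.sum_le_sum fun x _ => Real.add_one_le_exp _
      _ = F.card / M * ∑ x ∈ F, Real.exp (-f x) := by
          simp only [sub_eq_add_neg, Real.exp_add, hexpL, Finset.mul_sum]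
      _ ≤ F.card / M * M := by gcongr
      _ = F.card := div_mul_cancel₀ _ hM.ne'
  simp only [Finset.sum_add_distrib, Finset.sum_sub_distrib, Finset.sum_const, nsmul_eq_mul,
    mul_one] at htangent
  linarith

variable {X : Type*} [PseudoMetricSpace X] {T : X → X} {δ lam : ℝ} {n : ℕ}

lemma bowenDist_lt (hδ : 0 < δ) {x y : X} (h : ∀ k < n, dist (T^[k] x) (T^[k] y) < δ) :
    bowenDist T n x y < δ := by
  rw [bowenDist]
  cases isEmpty_or_nonempty (Fin n)
  · rwa [Real.iSup_of_isEmpty]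
  · obtain ⟨k, hk⟩ := exists_eq_ciSup_of_finite
      (f := fun j : Fin n => dist (T^[(j : ℕ)] x) (T^[(j : ℕ)] y))
    exact hk ▸ h k k.isLt

variable {ρ : X → X → ℝ} {C F : Finset X}

/-- A point is coded by the times at which it shadows the reference sequence `z`, and by a net point
at all other times. -/
lemma exists_injOn_shadowing_code (hδ : 0 < δ) (hC : ∀ x, ∃ c ∈ C, dist x c < δ / 2)
    (hF : (F : Set X).Pairwise fun x y => δ ≤ bowenDist T n x y) (z : ℕ → X) :
    ∃ code : X → Fin n → Option C, InjOn code F ∧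
      ∀ x (k : Fin n), code x k ≠ none → δ / 2 ≤ dist (T^[(k : ℕ)] x) (z k) := by
  classical
  choose near hnear hdist using hC
  let code : X → Fin n → Option C := fun x k =>
    if dist (T^[(k : ℕ)] x) (z k) < δ / 2 then none
    else some ⟨near (T^[(k : ℕ)] x), hnear _⟩
  have hclose {x y : X} {k : Fin n} (h : code x k = code y k) :
      dist (T^[(k : ℕ)] x) (T^[(k : ℕ)] y) < δ := by
    suffices ∃ c, dist (T^[(k : ℕ)] x) c < δ / 2 ∧ dist (T^[(k : ℕ)] y) c < δ / 2 by
      obtain ⟨c, hx, hy⟩ := this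
      linarith [dist_triangle_right (T^[(k : ℕ)] x) (T^[(k : ℕ)] y) c]
    by_cases hx : dist (T^[(k : ℕ)] x) (z k) < δ / 2 <;>
      by_cases hy : dist (T^[(k : ℕ)] y) (z k) < δ / 2 <;>
      simp only [code, hx, hy, if_true, if_false, reduceCtorEq, Option.some.injEq,
        Subtype.mk.injEq] at h
    · exact ⟨z k, hx, hy⟩
    · exact ⟨near (T^[(k : ℕ)] x), hdist _, h ▸ hdist _⟩
  refine ⟨code, fun x hx y hy hxy => ?_, fun x k hk => not_lt.1 fun hlt => hk (if_pos hlt)⟩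
  by_contra hne
  exact (hF hx hy hne).not_gt
    (bowenDist_lt hδ fun k hk => hclose (k := ⟨k, hk⟩) (congrFun hxy ⟨k, hk⟩))

lemma sum_exp_neg_sum_le (hδ : 0 < δ) (hρ0 : ∀ x y, 0 ≤ ρ x y)
    (hρ : ∀ x y, δ / 2 ≤ dist x y → lam ≤ ρ x y) (hC : ∀ x, ∃ c ∈ C, dist x c < δ / 2)
    (hF : (F : Set X).Pairwise fun x y => δ ≤ bowenDist T n x y) (z : ℕ → X) :
    ∑ x ∈ F, Real.exp (-∑ k ∈ Finset.range n, ρ (T^[k] x) (z k)) ≤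
      (1 + C.card * Real.exp (-lam)) ^ n := by
  obtain ⟨code, hcode, hfar⟩ := exists_injOn_shadowing_code hδ hC hF z
  let w : Option C → ℝ := fun o => o.elim 1 fun _ => Real.exp (-lam)
  have hw (x : X) (k : Fin n) : Real.exp (-ρ (T^[(k : ℕ)] x) (z k)) ≤ w (code x k) := by
    rcases h : code x k with _ | c
    · exact Real.exp_le_one_iff.2 (neg_nonpos.2 (hρ0 _ _))
    · exact Real.exp_le_exp.2 (neg_le_neg (hρ _ _ (hfar x k (h ▸ Option.some_ne_none c))))
  calc ∑ x ∈ F, Real.exp (-∑ k ∈ Finset.range n, ρ (T^[k] x) (z k))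
      = ∑ x ∈ F, ∏ k : Fin n, Real.exp (-ρ (T^[(k : ℕ)] x) (z k)) := by
        simp only [← Finset.sum_neg_distrib, Finset.sum_range, Real.exp_sum]
    _ ≤ ∑ x ∈ F, ∏ k : Fin n, w (code x k) :=
        Finset.sum_le_sum fun x _ =>
          Finset.prod_le_prod (fun _ _ => (Real.exp_pos _).le) fun k _ => hw x k
    _ ≤ (∑ o, w o) ^ n := sum_prod_le_sum_pow_of_injOn hcode fun o => by
        cases o <;> simp only [w, Option.elim_none, Option.elim_some, zero_le_one, Real.exp_nonneg]
    _ = (1 + C.card * Real.exp (-lam)) ^ n := by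
        simp only [w, Fintype.sum_option, Option.elim_none, Option.elim_some, Finset.sum_const,
          Finset.card_univ, Fintype.card_coe, nsmul_eq_mul]

lemma sum_exp_neg_sum_iterate_le (hδ : 0 < δ) (hρ0 : ∀ x y, 0 ≤ ρ x y) (hρlam : ∀ x y, ρ x y ≤ lam)
    (hρ : ∀ x y, δ / 2 ≤ dist x y → lam ≤ ρ x y) (hC : ∀ x, ∃ c ∈ C, dist x c < δ / 2)
    (hF : (F : Set X).Pairwise fun x y => δ ≤ bowenDist T n x y) {t N : ℕ} (hn : n ≤ t + N)
    (z : ℕ → X) :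
    ∑ x ∈ F, Real.exp (-∑ i ∈ Finset.range N, ρ (T^[i] (T^[t] x)) (z i)) ≤
      Real.exp (t * lam) * (1 + C.card * Real.exp (-lam)) ^ n := by
  have horbit (x : X) : ∑ k ∈ Finset.range n, ρ (T^[k] x) (z (k - t)) ≤
      t * lam + ∑ i ∈ Finset.range N, ρ (T^[i] (T^[t] x)) (z i) :=
    calc ∑ k ∈ Finset.range n, ρ (T^[k] x) (z (k - t))
        ≤ ∑ k ∈ Finset.range (t + N), ρ (T^[k] x) (z (k - t)) :=
          Finset.sum_le_sum_of_subset_of_nonneg (Finset.range_mono hn) fun _ _ _ => hρ0 _ _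
      _ = ∑ k ∈ Finset.range t, ρ (T^[k] x) (z (k - t)) +
            ∑ i ∈ Finset.range N, ρ (T^[i] (T^[t] x)) (z i) := by
          simp only [Finset.sum_range_add, add_tsub_cancel_left]
          simp only [← Function.iterate_add_apply, Nat.add_comm t]
      _ ≤ t * lam + ∑ i ∈ Finset.range N, ρ (T^[i] (T^[t] x)) (z i) := by
          gcongr
          simpa only [Finset.card_range, nsmul_eq_mul] using
            Finset.sum_le_card_nsmul (Finset.range t) _ lam fun k _ => hρlam (T^[k] x) (z (k - t))
  calc ∑ x ∈ F, Real.exp (-∑ i ∈ Finset.range N, ρ (T^[i] (T^[t] x)) (z i))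
      ≤ ∑ x ∈ F, Real.exp (t * lam) *
          Real.exp (-∑ k ∈ Finset.range n, ρ (T^[k] x) (z (k - t))) := by
        refine Finset.sum_le_sum fun x _ => ?_
        rw [← Real.exp_add, Real.exp_le_exp]
        linarith [horbit x]
    _ ≤ Real.exp (t * lam) * (1 + C.card * Real.exp (-lam)) ^ n := by
        rw [← Finset.mul_sum]
        gcongr
        exact sum_exp_neg_sum_le hδ hρ0 hρ hC hF _

end Counting

section Blocks

lemma sum_range_mul {M : Type*} [AddCommMonoid M] (f : ℕ → M) (J m : ℕ) :
    ∑ i ∈ Finset.range (J * m), f i =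
      ∑ j ∈ Finset.range J, ∑ k ∈ Finset.range m, f (j * m + k) := by
  induction J with
  | zero => simp only [zero_mul, Finset.range_zero, Finset.sum_empty]
  | succ J ih => rw [Finset.sum_range_succ, ← ih, Nat.succ_mul, Finset.sum_range_add]

lemma birkhoffSum_mul_eq_sum_phases {α M : Type*} [AddCommMonoid M] (T : α → α) (f : α → M)
    (J m : ℕ) (x : α) :
    birkhoffSum T f (J * m) x =
      ∑ t ∈ Finset.range m, birkhoffSum (T^[m]) f J (T^[t] x) := by
  simp only [birkhoffSum]
  rw [sum_range_mul, Finset.sum_comm]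
  simp only [← Function.iterate_mul, ← Function.iterate_add_apply, Nat.mul_comm m]

lemma birkhoffSum_le_add {α : Type*} {T : α → α} {f : α → ℝ} {M : ℝ} (hf0 : ∀ x, 0 ≤ f x)
    (hfM : ∀ x, f x ≤ M) {N n m : ℕ} (hN : N ≤ n + m) (x : α) :
    birkhoffSum T f N x ≤ birkhoffSum T f n x + m * M :=
  calc birkhoffSum T f N x ≤ birkhoffSum T f (n + m) x :=
        Finset.sum_le_sum_of_subset_of_nonneg (Finset.range_mono hN) fun _ _ _ => hf0 _
    _ = birkhoffSum T f n x + birkhoffSum T f m (T^[n] x) := birkhoffSum_add T f n m x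
    _ ≤ birkhoffSum T f n x + m * M := by
        gcongr
        simpa only [birkhoffSum, Finset.card_range, nsmul_eq_mul] using
          Finset.sum_le_card_nsmul (Finset.range m) _ M fun k _ => hfM (T^[k] (T^[n] x))

/-- The total cost `∑ ρ(T^k u, y_k)` of reproducing the first `m` points of the orbit of `u` by the
word `y`. -/
def blockCost {X : Type*} (T : X → X) (ρ : X → X → ℝ) (m : ℕ) (u : X) (y : Fin m → X) : ℝ :=
  ∑ k : Fin m, ρ (T^[(k : ℕ)] u) (y k)

variable {X : Type*} {T : X → X} {ρ : X → X → ℝ} {lam : ℝ} {m : ℕ}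

lemma continuous_blockCost [TopologicalSpace X] (hT : Continuous T)
    (hρ : Continuous (Function.uncurry ρ)) : Continuous (Function.uncurry (blockCost T ρ m)) := by
  simp only [Function.uncurry_def, blockCost]
  exact continuous_finsetSum _ fun k _ => hρ.comp
    (((hT.iterate k).comp continuous_fst).prodMk ((continuous_apply k).comp continuous_snd))

lemma blockCost_nonneg (hρ0 : ∀ x y, 0 ≤ ρ x y) (u : X) (y : Fin m → X) :
    0 ≤ blockCost T ρ m u y :=
  Finset.sum_nonneg fun _ _ => hρ0 _ _

lemma blockCost_le (hρlam : ∀ x y, ρ x y ≤ lam) (u : X) (y : Fin m → X) :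
    blockCost T ρ m u y ≤ m * lam := by
  simpa only [blockCost, Finset.card_univ, Fintype.card_fin, nsmul_eq_mul] using
    Finset.sum_le_card_nsmul Finset.univ _ lam fun (k : Fin m) _ =>
      hρlam (T^[(k : ℕ)] u) (y k)

lemma exists_sum_blockCost_eq_sum_range [NeZero m] {J : ℕ} [NeZero J] (w : Fin J → Fin m → X) :
    ∃ z : ℕ → X, ∀ u, ∑ j : Fin J, blockCost T ρ m ((T^[m])^[(j : ℕ)] u) (w j) =
      ∑ i ∈ Finset.range (J * m), ρ (T^[i] u) (z i) := by
  refine ⟨fun i => w (Fin.ofNat J (i / m)) (Fin.ofNat m i), fun u => ?_⟩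
  rw [sum_range_mul, Finset.sum_range]
  refine Finset.sum_congr rfl fun j _ => ?_
  rw [Finset.sum_range]
  refine Finset.sum_congr rfl fun k _ => ?_
  have hj : Fin.ofNat J ((j * m + k) / m) = j := by
    rw [mul_comm, Nat.mul_add_div (NeZero.pos m), Nat.div_eq_of_lt k.isLt, add_zero]
    exact Fin.ofNat_val_eq_self j
  have hk : Fin.ofNat m (j * m + k) = k := by
    apply Fin.ext
    rw [Fin.val_ofNat, Nat.mul_add_mod', Nat.mod_eq_of_lt k.isLt]
  simp only [hj, hk]
  rw [← Function.iterate_mul, ← Function.iterate_add_apply, mul_comm m, add_comm]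

end Blocks

section SeparatedSets

/-- A continuous cost with values in `[0, lam]` which charges the full price `lam` to every pair of
points at distance at least `θ`. -/
structure IsThresholdCost {X : Type*} [PseudoMetricSpace X] (ρ : X → X → ℝ) (θ lam : ℝ) :
    Prop where
  continuous : Continuous (Function.uncurry ρ)
  nonneg : ∀ x y, 0 ≤ ρ x y
  le : ∀ x y, ρ x y ≤ lam
  le_of_le_dist : ∀ x y, θ ≤ dist x y → lam ≤ ρ x y

lemma exists_isThresholdCost {X : Type*} [PseudoMetricSpace X] {ε θ lam : ℝ}
    (hεθ : ε < θ) (hlam : 0 ≤ lam) :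
    ∃ ρ : X → X → ℝ, IsThresholdCost ρ θ lam ∧ ∀ x y, dist x y < ε → ρ x y = 0 := by
  obtain ⟨f, hnear, hfar, hf⟩ := exists_continuous_zero_one_of_isClosed
    (isClosed_le (continuous_dist (α := X)) continuous_const)
    (isClosed_le (continuous_const (y := θ)) (continuous_dist (α := X)))
    (disjoint_left.2 fun x (hx : dist x.1 x.2 ≤ ε) hx' => (hx.trans_lt hεθ).not_ge hx')
  refine ⟨fun x y => lam * f (x, y), ⟨?_, ?_, ?_, ?_⟩, fun x y hxy => ?_⟩
  · exact continuous_const.mul f.continuous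
  · exact fun x y => mul_nonneg hlam (hf _).1
  · exact fun x y => mul_le_of_le_one_right hlam (hf _).2
  · exact fun x y hxy => (mul_one lam).symm.trans_le (congrArg (lam * ·) (hfar hxy)).ge
  · exact (congrArg (lam * ·) (hnear hxy.le)).trans (mul_zero lam)

variable {X : Type*} [PseudoMetricSpace X] [CompactSpace X] [MeasurableSpace X] [BorelSpace X]
  {T : X → X} {δ lam : ℝ} {n m : ℕ} [NeZero m] {ρ : X → X → ℝ} {C F : Finset X}
  {r : Measure (Fin m → X)} [IsProbabilityMeasure r]

lemma sum_exp_neg_birkhoffSum_le (hT : Continuous T) (hδ : 0 < δ)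
    (hρ : IsThresholdCost ρ (δ / 2) lam) (hC : ∀ x, ∃ c ∈ C, dist x c < δ / 2)
    (hF : (F : Set X).Pairwise fun x y => δ ≤ bowenDist T n x y) {t J : ℕ} [NeZero J]
    (hn : n ≤ t + J * m) :
    ∑ x ∈ F, Real.exp (-birkhoffSum (T^[m]) (freeEnergy (blockCost T ρ m) r) J (T^[t] x)) ≤
      Real.exp (t * lam) * (1 + C.card * Real.exp (-lam)) ^ n := by
  have hc : Continuous (Function.uncurry (blockCost T ρ m)) := continuous_blockCost hT hρ.continuous
  have hint (x : X) : Integrable (fun w : Fin J → Fin m → X =>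
      Real.exp (-∑ j : Fin J, blockCost T ρ m ((T^[m])^[(j : ℕ)] (T^[t] x)) (w j)))
      (Measure.pi fun _ => r) :=
    integrable_of_continuous _ (Real.continuous_exp.comp (continuous_finsetSum _ fun j _ =>
      (hc.uncurry_left _).comp (continuous_apply j)).neg)
  simp only [← integral_pi_exp_neg_sum_eq_exp_neg_birkhoffSum hc]
  rw [← integral_finsetSum F fun x _ => hint x]
  refine (integral_mono (integrable_finsetSum F fun x _ => hint x) (integrable_const
    (Real.exp (t * lam) * (1 + C.card * Real.exp (-lam)) ^ n)) fun w => ?_).trans_eq ?_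
  · obtain ⟨z, hz⟩ := exists_sum_blockCost_eq_sum_range (T := T) (ρ := ρ) w
    simp only [hz]
    exact sum_exp_neg_sum_iterate_le hδ hρ.nonneg hρ.le hρ.le_of_le_dist hC hF hn z
  · rw [integral_const, probReal_univ, one_smul]

lemma card_mul_log_card_sub_le_sum_birkhoffSum_mul (hT : Continuous T) (hδ : 0 < δ)
    (hρ : IsThresholdCost ρ (δ / 2) lam) (hC : ∀ x, ∃ c ∈ C, dist x c < δ / 2)
    (hF : (F : Set X).Pairwise fun x y => δ ≤ bowenDist T n x y) (hFne : F.Nonempty) {J : ℕ}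
    [NeZero J] (hn : n ≤ J * m) :
    m * (F.card * (Real.log F.card - (m * lam + n * Real.log (1 + C.card * Real.exp (-lam))))) ≤
      ∑ x ∈ F, birkhoffSum T (freeEnergy (blockCost T ρ m) r) (J * m) x := by
  have ⟨x₀, _⟩ := hFne
  have hlam : 0 ≤ lam := (hρ.nonneg x₀ x₀).trans (hρ.le x₀ x₀)
  have hphase : ∀ t ∈ Finset.range m,
      F.card * (Real.log F.card - (m * lam + n * Real.log (1 + C.card * Real.exp (-lam)))) ≤
        ∑ x ∈ F, birkhoffSum (T^[m]) (freeEnergy (blockCost T ρ m) r) J (T^[t] x) := by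
    intro t ht
    have htm : (t : ℝ) ≤ m := Nat.cast_le.2 (Finset.mem_range.1 ht).le
    refine le_trans ?_ (card_mul_log_card_sub_le_sum hFne (by positivity)
      (sum_exp_neg_birkhoffSum_le (r := r) hT hδ hρ hC hF (by omega)))
    rw [Real.log_mul (by positivity) (by positivity), Real.log_exp, Real.log_pow]
    gcongr
  simp only [birkhoffSum_mul_eq_sum_phases]
  rw [Finset.sum_comm]
  simpa only [Finset.card_range, nsmul_eq_mul] using
    Finset.card_nsmul_le_sum (Finset.range m) _ _ hphase

lemma card_mul_log_card_sub_le_sum_birkhoffSum_add (hT : Continuous T) (hδ : 0 < δ)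
    (hρ : IsThresholdCost ρ (δ / 2) lam) (hC : ∀ x, ∃ c ∈ C, dist x c < δ / 2)
    (hF : (F : Set X).Pairwise fun x y => δ ≤ bowenDist T n x y) (hFne : F.Nonempty) :
    m * (F.card * (Real.log F.card - (m * lam + n * Real.log (1 + C.card * Real.exp (-lam))))) ≤
      ∑ x ∈ F, birkhoffSum T (freeEnergy (blockCost T ρ m) r) n x + F.card * (m * (m * lam)) := by
  have hc : Continuous (Function.uncurry (blockCost T ρ m)) := continuous_blockCost hT hρ.continuous
  have hJn : n ≤ (n / m + 1) * m := (Nat.lt_mul_of_div_lt (Nat.lt_succ_self _) (NeZero.pos m)).le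
  have hnJ : (n / m + 1) * m ≤ n + m := by
    rw [Nat.succ_mul]
    exact Nat.add_le_add_right (Nat.div_mul_le_self n m) m
  calc m * (F.card * (Real.log F.card - (m * lam + n * Real.log (1 + C.card * Real.exp (-lam)))))
      ≤ ∑ x ∈ F, birkhoffSum T (freeEnergy (blockCost T ρ m) r) ((n / m + 1) * m) x :=
        card_mul_log_card_sub_le_sum_birkhoffSum_mul hT hδ hρ hC hF hFne hJn
    _ ≤ ∑ x ∈ F, (birkhoffSum T (freeEnergy (blockCost T ρ m) r) n x + m * (m * lam)) :=
        Finset.sum_le_sum fun x _ => birkhoffSum_le_add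
          (freeEnergy_nonneg hc (blockCost_nonneg hρ.nonneg))
          (freeEnergy_le hc (blockCost_le hρ.le)) hnJ x
    _ = ∑ x ∈ F, birkhoffSum T (freeEnergy (blockCost T ρ m) r) n x +
          F.card * (m * (m * lam)) := by
        rw [Finset.sum_add_distrib, Finset.sum_const, nsmul_eq_mul]

lemma log_card_div_le (hT : Continuous T) (hδ : 0 < δ) (hρ : IsThresholdCost ρ (δ / 2) lam)
    (hC : ∀ x, ∃ c ∈ C, dist x c < δ / 2)
    (hF : (F : Set X).Pairwise fun x y => δ ≤ bowenDist T n x y) (hFne : F.Nonempty)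
    (hn : 0 < n) :
    Real.log F.card / n ≤
      (n * F.card : ℝ)⁻¹ * (∑ x ∈ F, birkhoffSum T (freeEnergy (blockCost T ρ m) r) n x) / m +
        Real.log (1 + C.card * Real.exp (-lam)) + 2 * m * lam / n := by
  set B := ∑ x ∈ F, birkhoffSum T (freeEnergy (blockCost T ρ m) r) n x
  set K := 1 + C.card * Real.exp (-lam)
  have hmpos : (0 : ℝ) < m := Nat.cast_pos.2 (NeZero.pos m)
  have hscaled : Real.log F.card - (m * lam + n * Real.log K) ≤ B / (m * F.card) + m * lam := by
    rw [← sub_le_iff_le_add, le_div_iff₀ (by positivity)]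
    linarith [card_mul_log_card_sub_le_sum_birkhoffSum_add (r := r) hT hδ hρ hC hF hFne]
  calc Real.log F.card / n
      ≤ (B / (m * F.card) + n * Real.log K + 2 * m * lam) / n := by
        gcongr
        linarith
    _ = (n * F.card : ℝ)⁻¹ * B / m + Real.log K + 2 * m * lam / n := by
        field_simp

end SeparatedSets

section RateDistortion

variable {X : Type*} [PseudoMetricSpace X] {T : X → X} {ρ : X → X → ℝ} {ε lam : ℝ} {m : ℕ}

lemma blockCost_le_mul_card (hρlam : ∀ x y, ρ x y ≤ lam) (hρε : ∀ x y, dist x y < ε → ρ x y = 0)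
    (u : X) (y : Fin m → X) :
    blockCost T ρ m u y ≤ lam * Nat.card {k : Fin m // ε ≤ dist (T^[(k : ℕ)] u) (y k)} := by
  classical
  calc blockCost T ρ m u y
      ≤ ∑ k : Fin m, if ε ≤ dist (T^[(k : ℕ)] u) (y k) then lam else 0 := by
        refine Finset.sum_le_sum fun k _ => ?_
        split_ifs with h
        · exact hρlam _ _
        · exact (hρε _ _ (not_le.1 h)).le
    _ = lam * Nat.card {k : Fin m // ε ≤ dist (T^[(k : ℕ)] u) (y k)} := by
        rw [← Finset.sum_filter, Finset.sum_const, nsmul_eq_mul, mul_comm,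
          Nat.card_eq_fintype_card, Fintype.card_subtype]

variable [CompactSpace X] [MeasurableSpace X] [BorelSpace X]

lemma ofReal_integral_blockCost_le (hT : Continuous T) {θ s : ℝ} (hlam : 0 ≤ lam)
    (hρ : IsThresholdCost ρ θ lam) (hρε : ∀ x y, dist x y < ε → ρ x y = 0)
    {ν : Measure (X × (Fin m → X))} [IsFiniteMeasure ν]
    (hν : ∫⁻ p, (Nat.card {k : Fin m // ε ≤ dist (T^[(k : ℕ)] p.1) (p.2 k)} : ℝ≥0∞) ∂ν
      ≤ ENNReal.ofReal (s * m)) :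
    ENNReal.ofReal (∫ p, blockCost T ρ m p.1 p.2 ∂ν) ≤ ENNReal.ofReal (lam * s * m) := by
  rw [ofReal_integral_eq_lintegral_ofReal (f := fun p => blockCost T ρ m p.1 p.2)
    (integrable_of_continuous ν (continuous_blockCost hT hρ.continuous))
    (Eventually.of_forall fun p => blockCost_nonneg hρ.nonneg p.1 p.2)]
  calc ∫⁻ p, ENNReal.ofReal (blockCost T ρ m p.1 p.2) ∂ν
      ≤ ∫⁻ p, ENNReal.ofReal lam *
          Nat.card {k : Fin m // ε ≤ dist (T^[(k : ℕ)] p.1) (p.2 k)} ∂ν := by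
        refine lintegral_mono fun p => ?_
        rw [← ENNReal.ofReal_natCast, ← ENNReal.ofReal_mul hlam]
        exact ENNReal.ofReal_le_ofReal (blockCost_le_mul_card hρ.le hρε p.1 p.2)
    _ ≤ ENNReal.ofReal lam * ENNReal.ofReal (s * m) := by
        rw [lintegral_const_mul' _ _ ENNReal.ofReal_ne_top]
        gcongr
    _ = ENNReal.ofReal (lam * s * m) := by rw [← ENNReal.ofReal_mul hlam, mul_assoc]

lemma integral_smul_sum_dirac_iterate {f : X → ℝ} (hf : Continuous f) (n : ℕ) (F : Finset X) :
    ∫ x, f x ∂(((n : ℝ≥0∞) * F.card)⁻¹ •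
        ∑ x ∈ F, ∑ k ∈ Finset.range n, Measure.dirac (T^[k] x)) =
      (n * F.card : ℝ)⁻¹ * ∑ x ∈ F, birkhoffSum T f n x := by
  have hint (ν : Measure X) [IsFiniteMeasure ν] : Integrable f ν := integrable_of_continuous ν hf
  rw [integral_smul_measure, integral_finsetSum_measure fun x _ => hint _, smul_eq_mul,
    ENNReal.toReal_inv, ENNReal.toReal_mul, ENNReal.toReal_natCast, ENNReal.toReal_natCast]
  congr 1
  refine Finset.sum_congr rfl fun x _ => ?_
  rw [integral_finsetSum_measure fun k _ => hint _]
  exact Finset.sum_congr rfl fun k _ =>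
    integral_dirac' f _ hf.stronglyMeasurable

variable {δ : ℝ} {ι : Type*} {l : Filter ι} [l.NeBot] {n : ι → ℕ} {F : ι → Finset X}
  {μ : Measure X} {C : Finset X}

lemma limsup_log_card_div_le [NeZero m] {r : Measure (Fin m → X)} [IsProbabilityMeasure r]
    (hT : Continuous T) (hδ : 0 < δ) (hρ : IsThresholdCost ρ (δ / 2) lam)
    (hC : ∀ x, ∃ c ∈ C, dist x c < δ / 2) (hn : Tendsto n l atTop)
    (hF : ∀ i, (F i : Set X).Pairwise fun x y => δ ≤ bowenDist T (n i) x y)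
    (hμ : ∀ f : C(X, ℝ), Tendsto (fun i => ∫ x, f x ∂(((n i : ℝ≥0∞) * (F i).card)⁻¹ •
      ∑ x ∈ F i, ∑ k ∈ Finset.range (n i), Measure.dirac (T^[k] x))) l (𝓝 (∫ x, f x ∂μ))) :
    limsup (fun i => ENNReal.ofReal (Real.log (F i).card) / (n i : ℝ≥0∞)) l ≤
      ENNReal.ofReal ((∫ x, freeEnergy (blockCost T ρ m) r x ∂μ) / m +
        Real.log (1 + C.card * Real.exp (-lam))) := by
  have hH : Continuous (freeEnergy (blockCost T ρ m) r) :=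
    continuous_freeEnergy (continuous_blockCost hT hρ.continuous)
  have hempirical := hμ ⟨_, hH⟩
  simp only [ContinuousMap.coe_mk, integral_smul_sum_dirac_iterate hH] at hempirical
  have hboundary : Tendsto (fun i => 2 * m * lam / (n i : ℝ)) l (𝓝 0) :=
    (tendsto_natCast_atTop_atTop.comp hn).const_div_atTop _
  have hbound := ENNReal.tendsto_ofReal (((hempirical.div_const (m : ℝ)).add_const
    (Real.log (1 + C.card * Real.exp (-lam)))).add hboundary)
  rw [add_zero] at hbound
  refine (limsup_le_limsup ?_).trans_eq hbound.limsup_eq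
  filter_upwards [hn.eventually_gt_atTop 0] with i hi
  rw [← ENNReal.ofReal_natCast, ← ENNReal.ofReal_div_of_pos (Nat.cast_pos.2 hi)]
  rcases (F i).eq_empty_or_nonempty with hFi | hFi
  · simp only [hFi, Finset.card_empty, Nat.cast_zero, Real.log_zero, zero_div, ENNReal.ofReal_zero,
      zero_le]
  · exact ENNReal.ofReal_le_ofReal (log_card_div_le hT hδ hρ hC (hF i) hFi hi)

lemma ofReal_integral_freeEnergy_div_le [NeZero m] (hT : Continuous T) {θ s : ℝ} (hlam : 0 ≤ lam)
    (hρ : IsThresholdCost ρ θ lam) (hρε : ∀ x y, dist x y < ε → ρ x y = 0)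
    {ν : Measure (X × (Fin m → X))} [IsProbabilityMeasure ν]
    (hν : ∫⁻ p, (Nat.card {k : Fin m // ε ≤ dist (T^[(k : ℕ)] p.1) (p.2 k)} : ℝ≥0∞) ∂ν
      ≤ ENNReal.ofReal (s * m)) :
    ENNReal.ofReal
        ((∫ x, freeEnergy (blockCost T ρ m) (ν.map Prod.snd) x ∂(ν.map Prod.fst)) / m) ≤
      mutualInfo ν Prod.fst Prod.snd / m + ENNReal.ofReal (lam * s) := by
  have hm : (0 : ℝ) < m := Nat.cast_pos.2 (NeZero.pos m)
  calc _ ≤ (mutualInfo ν Prod.fst Prod.snd + ENNReal.ofReal (lam * s * m)) / m := by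
        rw [ENNReal.ofReal_div_of_pos hm, ENNReal.ofReal_natCast]
        gcongr
        exact (integral_freeEnergy_le measurable_fst measurable_snd
          (continuous_blockCost hT hρ.continuous)).trans
            (add_le_add_right (ofReal_integral_blockCost_le hT hlam hρ hρε hν) _)
    _ = mutualInfo ν Prod.fst Prod.snd / m + ENNReal.ofReal (lam * s) := by
        rw [ENNReal.add_div, ← ENNReal.ofReal_natCast (n := m), ← ENNReal.ofReal_div_of_pos hm,
          mul_div_cancel_right₀ _ hm.ne']

lemma limsup_log_card_div_le_rDistLInftyS_add (hT : Continuous T) (hδ : 0 < δ)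
    (hεδ : 2 * ε < δ) (hlam : 0 ≤ lam) {s : ℝ} (hs : 0 ≤ s)
    (hC : ∀ x, ∃ c ∈ C, dist x c < δ / 2) (hn : Tendsto n l atTop)
    (hF : ∀ i, (F i : Set X).Pairwise fun x y => δ ≤ bowenDist T (n i) x y)
    (hμ : ∀ f : C(X, ℝ), Tendsto (fun i => ∫ x, f x ∂(((n i : ℝ≥0∞) * (F i).card)⁻¹ •
      ∑ x ∈ F i, ∑ k ∈ Finset.range (n i), Measure.dirac (T^[k] x))) l (𝓝 (∫ x, f x ∂μ))) :
    limsup (fun i => ENNReal.ofReal (Real.log (F i).card) / (n i : ℝ≥0∞)) l ≤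
      RDistLInftyS T μ ε s +
        ENNReal.ofReal (lam * s + Real.log (1 + C.card * Real.exp (-lam))) := by
  obtain ⟨ρ, hρ, hρε⟩ := exists_isThresholdCost (X := X) (ε := ε) (θ := δ / 2) (by linarith) hlam
  rw [← tsub_le_iff_right]
  refine le_iInf₂ fun m hm => le_iInf₂ fun ν hν => le_iInf₂ fun hνμ _ => le_iInf fun hcost => ?_
  have : NeZero m := ⟨hm.ne'⟩
  have := Measure.isProbabilityMeasure_map (μ := ν) measurable_snd.aemeasurable
  subst hνμ
  rw [tsub_le_iff_right]
  calc limsup (fun i => ENNReal.ofReal (Real.log (F i).card) / (n i : ℝ≥0∞)) l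
      ≤ ENNReal.ofReal
            ((∫ x, freeEnergy (blockCost T ρ m) (ν.map Prod.snd) x ∂(ν.map Prod.fst)) / m) +
          ENNReal.ofReal (Real.log (1 + C.card * Real.exp (-lam))) :=
        (limsup_log_card_div_le hT hδ hρ hC hn hF hμ).trans ENNReal.ofReal_add_le
    _ ≤ mutualInfo ν Prod.fst Prod.snd / m + ENNReal.ofReal (lam * s) +
          ENNReal.ofReal (Real.log (1 + C.card * Real.exp (-lam))) := by
        gcongr
        exact ofReal_integral_freeEnergy_div_le hT hlam hρ hρε hcost.le
    _ = mutualInfo ν Prod.fst Prod.snd / m +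
          ENNReal.ofReal (lam * s + Real.log (1 + C.card * Real.exp (-lam))) := by
        rw [add_assoc, ENNReal.ofReal_add (mul_nonneg hlam hs) (Real.log_nonneg
          (le_add_of_nonneg_right (by positivity)))]

lemma tendsto_mul_exp_neg_add_log_one_add (c : ℝ) :
    Tendsto (fun t : ℝ => t * Real.exp (-t) + Real.log (1 + c * Real.exp (-t))) atTop (𝓝 0) := by
  have hlinear : Tendsto (fun t : ℝ => t * Real.exp (-t)) atTop (𝓝 0) := by
    simpa only [pow_one] using Real.tendsto_pow_mul_exp_neg_atTop_nhds_zero 1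
  have harg : Tendsto (fun t : ℝ => 1 + c * Real.exp (-t)) atTop (𝓝 1) := by
    simpa only [mul_zero, add_zero] using
      (Real.tendsto_exp_neg_atTop_nhds_zero.const_mul c).const_add 1
  simpa only [Real.log_one, add_zero] using hlinear.add (harg.log one_ne_zero)

end RateDistortion

end MMD

theorem stmt2_general {X : Type*} [PseudoMetricSpace X] [CompactSpace X] [MeasurableSpace X]
    [BorelSpace X] {T : X → X} (hT : Continuous T) {ε δ : ℝ} (hδ : 0 < δ) (hεδ : 2 * ε < δ)
    {ι : Type*} {l : Filter ι} [l.NeBot] {n : ι → ℕ} (hn : Tendsto n l atTop)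
    {F : ι → Finset X}
    (hF : ∀ i, (F i : Set X).Pairwise fun x y => δ ≤ bowenDist T (n i) x y)
    {μ : Measure X}
    (hμ : ∀ f : C(X, ℝ), Tendsto (fun i => ∫ x, f x ∂(((n i : ℝ≥0∞) * (F i).card)⁻¹ •
      ∑ x ∈ F i, ∑ k ∈ Finset.range (n i), Measure.dirac (T^[k] x))) l (𝓝 (∫ x, f x ∂μ))) :
    limsup (fun i => ENNReal.ofReal (Real.log (F i).card) / (n i : ℝ≥0∞)) l ≤
      RDistLInfty T μ ε := by
  obtain ⟨C, hC⟩ := exists_finset_forall_dist_lt (Y := X) (half_pos hδ)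
  have herror := (ENNReal.tendsto_ofReal (tendsto_mul_exp_neg_add_log_one_add C.card)).const_add
    (RDistLInfty T μ ε)
  rw [ENNReal.ofReal_zero, add_zero] at herror
  refine ge_of_tendsto herror ?_
  filter_upwards [eventually_ge_atTop 0] with lam hlam
  refine (limsup_log_card_div_le_rDistLInftyS_add hT hδ hεδ hlam (Real.exp_pos (-lam)).le hC hn hF
    hμ).trans ?_
  gcongr
  exact le_iSup₂ (f := fun s (_ : 0 < s) => RDistLInftyS T μ ε s) _ (Real.exp_pos (-lam))

/-- Lemma 3.1: if maximal `(n,6ε)`-separated sets `F_n` of `E_n` have empirical measures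
converging (weak*) along a subsequence to an invariant measure `μ`, then
`limsup_j (1/n_j) log s_{n_j}(T,d,6ε,E_{n_j}) ≤ R_{μ,L∞}(ε)`. -/
theorem stmt2 {X : Type*} [MetricSpace X] [CompactSpace X] [MeasurableSpace X] [BorelSpace X]
    (T : X → X) (hT : Continuous T)
    (E : ℕ → Set X) (hE : ∀ n, (E n).Nonempty)
    (ε : ℝ) (hε : 0 < ε)
    (F : ℕ → Finset X)
    (hFsub : ∀ n, ↑(F n) ⊆ E n)
    (hFsep : ∀ n, ∀ x ∈ F n, ∀ y ∈ F n, x ≠ y → 6 * ε ≤ bowenDist T n x y)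
    (hFcard : ∀ n, (F n).card = sepNum T n (6 * ε) (E n))
    (φ : ℕ → ℕ) (hφ : StrictMono φ)
    (μ : Measure X) (hμp : IsProbabilityMeasure μ) (hμinv : MeasurePreserving T μ μ)
    (hconv : ∀ f : C(X, ℝ), Filter.Tendsto (fun j : ℕ =>
        ∫ x, f x ∂((((φ j : ℝ≥0∞) * ((F (φ j)).card : ℝ≥0∞))⁻¹) •
          ∑ x ∈ F (φ j), ∑ k ∈ Finset.range (φ j), Measure.dirac (T^[k] x)))
      Filter.atTop (nhds (∫ x, f x ∂μ))) :
    Filter.limsup (fun j : ℕ =>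
        ENNReal.ofReal (Real.log (sepNum T (φ j) (6 * ε) (E (φ j)))) / (φ j : ℝ≥0∞))
      Filter.atTop ≤ RDistLInfty T μ ε := by
  simp only [← hFcard]
  exact stmt2_general hT (by positivity) (by linarith) hφ.tendsto_atTop
    (fun j x hx y hy => hFsep _ x hx y hy) hconv
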